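/- Let d ≥ 1, let p_1 ≥ … ≥ p_d ≥ 0 be real numbers, let A and B be d×d complex Hermitian matrices, and let C = A + B, with eigenvalues a_1 ≥ … ≥ a_d, b_1 ≥ … ≥ b_d, and c_1 ≥ … ≥ c_d, respectively. Then ∑_{i=1}^d p_{i,d−i+1} (c_i − c_{d−i+1})² ≤ ∑_{i=1}^d p_{i,d−i+1} (a_i − a_{d−i+1} + b_i − b_{d−i+1})². (Lemma 6 of the Supplemental Material.) -/

import Mathlib

/-- The coefficients `p_{i,j}`: `0` if `p i = p j = 0`, else `(p i - p j)² / (p i + p j)`. -/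
noncomputable def pij {d : ℕ} (p : Fin d → ℝ) (i j : Fin d) : ℝ :=
  if p i = 0 ∧ p j = 0 then 0 else (p i - p j) ^ 2 / (p i + p j)

theorem pij_eq' {d : ℕ} (p : Fin d → ℝ) (i j : Fin d) :
    pij p i j = (p i - p j) ^ 2 / (p i + p j) := by
  unfold pij
  split_ifs with h
  · simp [h.1, h.2]
  · rfl

theorem m_mono' {x x' y y' : ℝ} (h1 : x' ≤ x) (h2 : y' ≤ x') (h3 : y ≤ y') (h4 : 0 ≤ y) :
    (x' - y') ^ 2 / (x' + y') ≤ (x - y) ^ 2 / (x + y) := by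
  rcases (show 0 ≤ x' + y' by linarith).eq_or_lt with h | h
  · rw [← h, div_zero]; exact div_nonneg (sq_nonneg _) (by linarith)
  have hxy' : 0 < x + y' := by linarith
  by_cases h0 : x + y = 0
  · have : x' + y' = 0 := by linarith
    linarith
  have hxy : 0 < x + y := lt_of_le_of_ne (by linarith) (Ne.symm h0)
  calc _ ≤ (x - y') ^ 2 / (x + y') := by
        rw [div_le_div_iff₀ h hxy']
        obtain ⟨r, hr⟩ : ∃ r, r = x' - y' := ⟨_, rfl⟩
        obtain ⟨s, hs⟩ : ∃ s, s = x - x' := ⟨_, rfl⟩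
        have hr0 : 0 ≤ r := by linarith
        have hs0 : 0 ≤ s := by linarith
        have hy0 : 0 ≤ y' := by linarith
        obtain rfl : x' = y' + r := by linarith
        obtain rfl : x = y' + r + s := by linarith
        have : 0 ≤ r^2*s + 4*(r*s*y') + 2*(s^2*y')+ s^2*r := by positivity
        nlinarith
    _ ≤ _ := by
        apply div_le_div₀ (sq_nonneg _) _ hxy (by linarith)
        apply pow_le_pow_left₀ <;> linarith

theorem pij_nonneg' {d : ℕ} (p : Fin d → ℝ) (hp0 : ∀ i, 0 ≤ p i) (i j : Fin d) :
    0 ≤ pij p i j := by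
  rw [pij_eq']; exact div_nonneg (sq_nonneg _) (add_nonneg (hp0 _) (hp0 _))

theorem pij_symm' {d : ℕ} (p : Fin d → ℝ) (i j : Fin d) : pij p i j = pij p j i := by
  rw [pij_eq', pij_eq', add_comm]; congr 1; ring

theorem q_anti_half {d : ℕ} (p : Fin d → ℝ) (hp : Antitone p) (hp0 : ∀ i, 0 ≤ p i)
    (c : Fin d → ℝ) (hc : Antitone c) {i j : Fin d} (hij : i ≤ j) (hj : j ≤ j.rev) :
    pij p j j.rev * (c j - c j.rev) ≤ pij p i i.rev * (c i - c i.rev) := by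
  have hr : j.rev ≤ i.rev := Fin.rev_le_rev.mpr hij
  apply mul_le_mul _ _ _ (pij_nonneg' p hp0 _ _)
  · rw [pij_eq', pij_eq']
    exact m_mono' (hp hij) (hp hj) (hp hr) (hp0 _)
  · linarith [hc hij, hc hr]
  · linarith [hc hj]

theorem q_odd {d : ℕ} (p c : Fin d → ℝ) (i : Fin d) :
    pij p i.rev i.rev.rev * (c i.rev - c i.rev.rev) = - (pij p i i.rev * (c i - c i.rev)) := by
  rw [Fin.rev_rev, pij_symm' p i.rev i]; ring

theorem q_anti {d : ℕ} (p : Fin d → ℝ) (hp : Antitone p) (hp0 : ∀ i, 0 ≤ p i)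
    (c : Fin d → ℝ) (hc : Antitone c) :
    Antitone fun i => pij p i i.rev * (c i - c i.rev) := by
  intro i j hij
  have hr : j.rev ≤ i.rev := Fin.rev_le_rev.mpr hij
  show pij p j j.rev * (c j - c j.rev) ≤ pij p i i.rev * (c i - c i.rev)
  rcases le_total j j.rev with hj | hj
  · exact q_anti_half p hp hp0 c hc hij hj
  · rcases le_total i i.rev with hi | hi
    · have h1 : 0 ≤ pij p i i.rev * (c i - c i.rev) :=
        mul_nonneg (pij_nonneg' p hp0 _ _) (by linarith [hc hi])
      have h2 : pij p j j.rev * (c j - c j.rev) ≤ 0 :=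
        mul_nonpos_of_nonneg_of_nonpos (pij_nonneg' p hp0 _ _) (by linarith [hc hj])
      linarith
    · have := q_anti_half p hp hp0 c hc hr (by rw [Fin.rev_rev]; exact hi)
      rw [q_odd, q_odd] at this
      linarith

theorem ds_rearr {d : ℕ} (M : Matrix (Fin d) (Fin d) ℝ) (hM : M ∈ doublyStochastic ℝ (Fin d))
    (q a : Fin d → ℝ) (hq : Antitone q) (ha : Antitone a) :
    ∑ i, q i * ∑ j, M i j * a j ≤ ∑ i, q i * a i := by
  obtain ⟨t, ht0, ht1, rfl⟩ := exists_eq_sum_perm_of_mem_doublyStochastic hM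
  have key : ∀ σ : Equiv.Perm (Fin d), ∑ i, q i * a (σ i) ≤ ∑ i, q i * a i := fun σ =>
    (hq.monovary ha).sum_mul_comp_perm_le_sum_mul
  have e : ∀ i, ∑ j, (∑ σ : Equiv.Perm (Fin d), t σ • σ.permMatrix ℝ) i j * a j
      = ∑ σ : Equiv.Perm (Fin d), t σ * a (σ i) := by
    intro i
    simp only [Matrix.sum_apply, Matrix.smul_apply, Finset.sum_mul]
    rw [Finset.sum_comm]
    refine Finset.sum_congr rfl fun σ _ => ?_
    simp [Equiv.Perm.permMatrix, PEquiv.toMatrix_apply, eq_comm]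
  simp_rw [e, Finset.mul_sum]
  rw [Finset.sum_comm]
  calc _ = ∑ σ : Equiv.Perm (Fin d), t σ * ∑ i, q i * a (σ i) := by
        refine Finset.sum_congr rfl fun σ _ => ?_
        rw [Finset.mul_sum]
        exact Finset.sum_congr rfl fun i _ => by ring
    _ ≤ ∑ σ : Equiv.Perm (Fin d), t σ * ∑ i, q i * a i :=
        Finset.sum_le_sum fun σ _ => mul_le_mul_of_nonneg_left (key σ) (ht0 σ)
    _ = _ := by rw [← Finset.sum_mul, ht1, one_mul]

theorem ds_rearr2 {d : ℕ} (M : Fin d → Fin d → ℝ) (h0 : ∀ i j, 0 ≤ M i j)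
    (h1 : ∀ i, ∑ j, M i j = 1) (h2 : ∀ j, ∑ i, M i j = 1)
    (q a : Fin d → ℝ) (hq : Antitone q) (ha : Antitone a) :
    ∑ i, q i * ∑ j, M i j * a j ≤ ∑ i, q i * a i :=
  ds_rearr (Matrix.of M) (mem_doublyStochastic_iff_sum.mpr ⟨h0, h1, h2⟩) q a hq ha

theorem exists_onb {d : ℕ} (u : Fin d → EuclideanSpace ℂ (Fin d)) (hu : Orthonormal ℂ u) :
    ∃ U : OrthonormalBasis (Fin d) ℂ (EuclideanSpace ℂ (Fin d)), ∀ i, U i = u i := by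
  have hs : ⊤ ≤ Submodule.span ℂ (Set.range u) :=
    (hu.linearIndependent.span_eq_top_of_card_eq_finrank' (by simp)).ge
  exact ⟨OrthonormalBasis.mk hu hs, fun i => by simp⟩

theorem trace_le {d : ℕ} (A : Matrix (Fin d) (Fin d) ℂ)
    (a q : Fin d → ℝ) (ha : Antitone a) (hq : Antitone q)
    (u w : Fin d → EuclideanSpace ℂ (Fin d)) (hu : Orthonormal ℂ u) (hw : Orthonormal ℂ w)
    (hAu : ∀ k, Matrix.toEuclideanLin A (u k) = (a k : ℂ) • u k) :
    ∑ i, q i * (inner ℂ (w i) (Matrix.toEuclideanLin A (w i))).re ≤ ∑ i, q i * a i := by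
  obtain ⟨U, hU⟩ := exists_onb u hu
  obtain ⟨W, hW⟩ := exists_onb w hw
  have e : ∀ i, (inner ℂ (w i) (Matrix.toEuclideanLin A (w i))).re
      = ∑ j, ‖inner ℂ (u j) (w i)‖ ^ 2 * a j := by
    intro i
    have h1 : Matrix.toEuclideanLin A (w i)
        = ∑ j, (inner ℂ (u j) (w i)) • ((a j : ℂ) • u j) := by
      conv_lhs => rw [← U.sum_repr' (w i)]
      simp only [map_sum, map_smul, hU, hAu]
    rw [h1, inner_sum, Complex.re_sum]
    refine Finset.sum_congr rfl fun j _ => ?_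
    rw [inner_smul_right, inner_smul_right, ← inner_conj_symm (w i) (u j),
      mul_left_comm, Complex.mul_conj, Complex.normSq_eq_norm_sq, ← Complex.ofReal_mul,
      Complex.ofReal_re, mul_comm]
  simp_rw [e]
  refine ds_rearr2 (fun i j => ‖inner ℂ (u j) (w i)‖ ^ 2) (fun i j => sq_nonneg _)
    (fun i => ?_) (fun j => ?_) q a hq ha
  · have := U.sum_sq_norm_inner_right (w i)
    simp only [hU, hw.1 i] at this
    simpa using this
  · have := W.sum_sq_norm_inner_left (u j)
    simp only [hW, hu.1 j] at this
    simpa using this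

/-- Lemma 6 of the Supplemental Material: for `p_1 ≥ … ≥ p_d ≥ 0` and Hermitian
`A, B, C = A + B` with decreasingly ordered eigenvalues `a, b, c` (each witnessed by
an orthonormal eigenbasis),
`∑ᵢ p_{i,d−i+1} (cᵢ − c_{d−i+1})² ≤ ∑ᵢ p_{i,d−i+1} (aᵢ − a_{d−i+1} + bᵢ − b_{d−i+1})²`. -/
theorem pij_weighted_sum_inequality {d : ℕ} (hd : 1 ≤ d)
    (p : Fin d → ℝ) (hp : Antitone p) (hp0 : ∀ i, 0 ≤ p i)
    (A B : Matrix (Fin d) (Fin d) ℂ) (hA : A.IsHermitian) (hB : B.IsHermitian)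
    (a b c : Fin d → ℝ) (ha : Antitone a) (hb : Antitone b) (hc : Antitone c)
    (u v w : Fin d → EuclideanSpace ℂ (Fin d))
    (hu : Orthonormal ℂ u) (hv : Orthonormal ℂ v) (hw : Orthonormal ℂ w)
    (hAu : ∀ k, Matrix.toEuclideanLin A (u k) = (a k : ℂ) • u k)
    (hBv : ∀ k, Matrix.toEuclideanLin B (v k) = (b k : ℂ) • v k)
    (hCw : ∀ k, Matrix.toEuclideanLin (A + B) (w k) = (c k : ℂ) • w k) :
    ∑ i, pij p i i.rev * (c i - c i.rev) ^ 2
      ≤ ∑ i, pij p i i.rev * (a i - a i.rev + (b i - b i.rev)) ^ 2 := by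
  have hq := q_anti p hp hp0 c hc
  set q : Fin d → ℝ := fun i => pij p i i.rev * (c i - c i.rev) with hqd
  have hodd : ∀ i, q i.rev = - q i := fun i => q_odd p c i
  have hA1 := trace_le A a q ha hq u w hu hw hAu
  have hB1 := trace_le B b q hb hq v w hv hw hBv
  have hC1 : ∑ i, q i * c i ≤ ∑ i, q i * a i + ∑ i, q i * b i := by
    refine le_trans (le_of_eq ?_) (add_le_add hA1 hB1)
    rw [← Finset.sum_add_distrib]
    refine Finset.sum_congr rfl fun i _ => ?_
    rw [← mul_add, ← Complex.add_re, ← inner_add_right, ← LinearMap.add_apply, ← map_add, hCw,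
      inner_smul_right, inner_self_eq_norm_sq_to_K, hw.1 i]
    simp
  have hrev : ∀ x : Fin d → ℝ, ∑ i, q i * (x i - x i.rev) = 2 * ∑ i, q i * x i := by
    intro x
    have : ∑ i, q i * x i.rev = - ∑ i, q i * x i := by
      rw [← Equiv.sum_comp Fin.revPerm (fun i => q i * x i), ← Finset.sum_neg_distrib]
      exact Finset.sum_congr rfl fun i _ => by simp [hodd]
    simp only [mul_sub, Finset.sum_sub_distrib, this]
    ring
  have hmain : ∑ i, q i * (c i - c i.rev) ≤ ∑ i, q i * (a i - a i.rev + (b i - b i.rev)) := by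
    simp only [mul_add, Finset.sum_add_distrib]
    rw [hrev, hrev, hrev]
    linarith
  have hamgm : ∑ i, q i * (a i - a i.rev + (b i - b i.rev)) ≤
      ∑ i, (pij p i i.rev * (c i - c i.rev) ^ 2 / 2
        + pij p i i.rev * (a i - a i.rev + (b i - b i.rev)) ^ 2 / 2) := by
    refine Finset.sum_le_sum fun i _ => ?_
    have h := mul_nonneg (pij_nonneg' p hp0 i i.rev)
      (sq_nonneg ((c i - c i.rev) - (a i - a i.rev + (b i - b i.rev))))
    simp only [hqd]
    nlinarith
  rw [Finset.sum_add_distrib, ← Finset.sum_div, ← Finset.sum_div] at hamgm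
  have heq : ∑ i, q i * (c i - c i.rev) = ∑ i, pij p i i.rev * (c i - c i.rev) ^ 2 :=
    Finset.sum_congr rfl fun i _ => by simp only [hqd]; ring
  linarith
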